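/- Let γ(t) = (t,t²,t³), so γ'(t) = (1,2t,3t²), γ''(t) = (0,2,6t), γ'''(t) = (0,0,6). Let r ≥ 1 be an integer, let R > 0, c ≥ 1, and a > 0. For each integer l with 0 ≤ l < r define S_l = {A γ'(l/r) + B γ''(l/r) + C γ'''(l/r) : a ≤ |A| ≤ c r^{−1}, |B| ≤ c r^{−2}, |C| ≤ c R^{−1}}. If S_l ∩ S_{l'} ≠ ∅ for two integers 0 ≤ l, l' < r, then |l − l'| ≤ 2c/(a r). -/

import Mathlib

open Real Set

noncomputable section

/-- `γ'(t) = (1, 2t, 3t²)`. -/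
def momD1 (t : ℝ) : Fin 3 → ℝ := ![1, 2*t, 3*t^2]

/-- `γ''(t) = (0, 2, 6t)`. -/
def momD2 (t : ℝ) : Fin 3 → ℝ := ![0, 2, 6*t]

/-- `γ'''(t) = (0, 0, 6)`. -/
def momD3 : Fin 3 → ℝ := ![0, 0, 6]

/-- The box `S_l` in the frame `(γ'(l/r), γ''(l/r), γ'''(l/r))` with first coefficient
bounded away from zero. -/
def Sbox (r : ℕ) (R c a : ℝ) (l : ℕ) : Set (Fin 3 → ℝ) :=
  {ξ | ∃ A B C : ℝ, a ≤ |A| ∧ |A| ≤ c / r ∧ |B| ≤ c / r^2 ∧ |C| ≤ c / R ∧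
        ξ = A • momD1 ((l:ℝ)/r) + B • momD2 ((l:ℝ)/r) + C • momD3}

/-- **Proposition 2.11 (overlap of the high parts).** If `S_l ∩ S_{l'} ≠ ∅` then
`|l − l'| ≤ 2c/(ar)`. -/
theorem high_parts_overlap
    (r : ℕ) (hr : 1 ≤ r) (R c a : ℝ) (hR : 0 < R) (hc : 1 ≤ c) (ha : 0 < a)
    (l l' : ℕ) (hl : l < r) (hl' : l' < r)
    (hne : (Sbox r R c a l ∩ Sbox r R c a l').Nonempty) :
    |(l : ℝ) - (l' : ℝ)| ≤ 2 * c / (a * r) := by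
  obtain ⟨ξ, ⟨A, B, C, hA, -, hB, -, h1⟩, ⟨A', B', C', -, -, hB', -, h2⟩⟩ := hne
  have hr0 : (0:ℝ) < r := by exact_mod_cast hr
  have h := h1.symm.trans h2
  have e0 := congrFun h 0
  have e1 := congrFun h 1
  simp [momD1, momD2, momD3] at e0 e1
  subst e0
  have key : A * ((l:ℝ) - l') = (B' - B) * r := by
    field_simp at e1
    linarith
  have hk : |A| * |(l:ℝ) - l'| ≤ 2 * c / r := by
    rw [← abs_mul, key, abs_mul, abs_of_pos hr0]
    have h3 : |B' - B| ≤ c / r^2 + c / r^2 := (abs_sub _ _).trans (add_le_add hB' hB)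
    calc |B' - B| * r ≤ (c / r^2 + c / r^2) * r := by gcongr
      _ = 2 * c / r := by field_simp; ring
  have h4 : a * |(l:ℝ) - l'| ≤ 2 * c / r :=
    (mul_le_mul_of_nonneg_right hA (abs_nonneg _)).trans hk
  rw [le_div_iff₀ hr0] at h4
  rw [le_div_iff₀ (by positivity)]
  linarith
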